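/- Consider sets B ⊆ ℝ² containing the boundary of an axis-parallel square centered at each point of the segment [0,1] × {0}; that is, for every t ∈ [0,1] there exists s(t) > 0 with {y ∈ ℝ² : ‖y − (t,0)‖_∞ = s(t)} ⊆ B. Then: (i) every such set B satisfies dim_P B ≥ 17/11; and (ii) there exists a compact set B ⊆ ℝ² with this property satisfying dim_M B ≤ 7/4. -/

import Mathlib

open Set Filter Bornology

/-- Covering number of `E` by open balls of radius `ε`. -/
noncomputable def covNum {X : Type*} [PseudoMetricSpace X] (E : Set X) (ε : ℝ) : ℕ∞ :=
  ⨅ (t : Finset X) (_ : E ⊆ ⋃ x ∈ t, Metric.ball x ε), (t.card : ℕ∞)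

/-- Upper Minkowski (box-counting) dimension. -/
noncomputable def dimM {X : Type*} [PseudoMetricSpace X] (E : Set X) : ℝ :=
  limsup (fun ε : ℝ => Real.log ((covNum E ε).toNat) / Real.log (1 / ε))
    (nhdsWithin 0 (Ioi 0))

/-- Packing dimension, as modified upper box dimension: the infimum of
`⨆ j, dimM (E j)` over countable covers of the set by bounded sets. -/
noncomputable def dimP {X : Type*} [PseudoMetricSpace X] (E : Set X) : ℝ :=
  sInf { a : ℝ | ∃ f : ℕ → Set X, (E ⊆ ⋃ j, f j) ∧ (∀ j, IsBounded (f j)) ∧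
    a = ⨆ j, dimM (f j) }

/-- The boundary of the axis-parallel square in the plane with center `c` and half-side `s`,
with respect to the sup norm `‖y - c‖_∞ = max |y 0 - c 0| |y 1 - c 1|`. -/
def squareBdry (c : Fin 2 → ℝ) (s : ℝ) : Set (Fin 2 → ℝ) :=
  { y | max |y 0 - c 0| |y 1 - c 1| = s }



section Comb
open Finset

lemma sum_inv_fiber {α β : Type*} [DecidableEq α] [DecidableEq β] (V : Finset α) (f : α → β) :
    ∑ v ∈ V, (1 : ℝ) / (#{w ∈ V | f w = f v} : ℝ) = #(V.image f) := by
  rw [← Finset.sum_fiberwise_of_maps_to (t := V.image f) (g := f)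
    (fun x hx => Finset.mem_image_of_mem f hx)]
  rw [Finset.card_eq_sum_ones, Nat.cast_sum]
  refine Finset.sum_congr rfl fun b hb => ?_
  have h1 : ∀ v ∈ ({w ∈ V | f w = b} : Finset α), (1 : ℝ) / (#{w ∈ V | f w = f v} : ℝ)
      = 1 / (#{w ∈ V | f w = b} : ℝ) := by
    intro v hv
    rw [(Finset.mem_filter.1 hv).2]
  rw [Finset.sum_congr rfl h1, Finset.sum_const, nsmul_eq_mul]
  obtain ⟨v, hv, rfl⟩ := Finset.mem_image.1 hb
  have : 0 < #{w ∈ V | f w = f v} := Finset.card_pos.2 ⟨v, by simp [hv]⟩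
  have h2 : ((#{w ∈ V | f w = f v} : ℕ) : ℝ) ≠ 0 := by positivity
  simp [h2]

lemma amgm3 (x y z c : ℝ) (hx : 0 ≤ x) (hy : 0 ≤ y) (hz : 0 ≤ z)
    (h : c ^ 3 = x * y * z) : 3 * c ≤ x + y + z := by
  by_contra! hlt
  have h0 : 0 ≤ x + y + z := by positivity
  have h1 : (x + y + z) ^ 3 < (3 * c) ^ 3 := pow_lt_pow_left₀ hlt h0 (by norm_num)
  nlinarith [mul_nonneg hx (sq_nonneg (y - z)), mul_nonneg hy (sq_nonneg (x - z)),
    mul_nonneg hz (sq_nonneg (x - y)), mul_nonneg h0 (sq_nonneg (x - y)),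
    mul_nonneg h0 (sq_nonneg (y - z)), mul_nonneg h0 (sq_nonneg (x - z))]

lemma exists_cbrt (x : ℝ) (hx : 0 ≤ x) : ∃ c : ℝ, 0 ≤ c ∧ c ^ 3 = x :=
  ⟨x ^ ((1 : ℝ) / 3), by positivity, by
    rw [← Real.rpow_natCast, ← Real.rpow_mul hx]; norm_num⟩

lemma holder3 {α : Type*} (V : Finset α) (d e : α → ℝ) (hd : ∀ v ∈ V, 0 < d v)
    (he : ∀ v ∈ V, 0 < e v) :
    (#V : ℝ) ^ 3 ≤ (∑ v ∈ V, d v * e v) * (∑ v ∈ V, 1 / d v) * (∑ v ∈ V, 1 / e v) := by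
  rcases V.eq_empty_or_nonempty with rfl | hne
  · simp
  have hXpos : 0 < ∑ v ∈ V, d v * e v :=
    Finset.sum_pos (fun v hv => mul_pos (hd v hv) (he v hv)) hne
  have hB1 : 0 < ∑ v ∈ V, 1 / d v := Finset.sum_pos (fun v hv => one_div_pos.2 (hd v hv)) hne
  have hB2 : 0 < ∑ v ∈ V, 1 / e v := Finset.sum_pos (fun v hv => one_div_pos.2 (he v hv)) hne
  obtain ⟨X, hX⟩ : ∃ X, X = ∑ v ∈ V, d v * e v := ⟨_, rfl⟩
  obtain ⟨B1, hB1e⟩ : ∃ X, X = ∑ v ∈ V, 1 / d v := ⟨_, rfl⟩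
  obtain ⟨B2, hB2e⟩ : ∃ X, X = ∑ v ∈ V, 1 / e v := ⟨_, rfl⟩
  rw [← hX] at hXpos
  rw [← hB1e] at hB1
  rw [← hB2e] at hB2
  obtain ⟨c, hc0, hc⟩ := exists_cbrt (1 / (X * B1 * B2)) (by positivity)
  have key : ∑ v ∈ V, 3 * c ≤ ∑ v ∈ V, (d v * e v / X + (1 / d v) / B1 + (1 / e v) / B2) := by
    refine Finset.sum_le_sum fun v hv => ?_
    have h1 := hd v hv
    have h2 := he v hv
    refine amgm3 _ _ _ _ (by positivity) (by positivity) (by positivity) ?_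
    rw [hc]
    field_simp
  rw [Finset.sum_add_distrib, Finset.sum_add_distrib, ← Finset.sum_div, ← Finset.sum_div,
    ← Finset.sum_div, ← hX, ← hB1e, ← hB2e, div_self hXpos.ne', div_self hB1.ne',
    div_self hB2.ne', Finset.sum_const, nsmul_eq_mul] at key
  have h3 : (#V : ℝ) * c ≤ 1 := by linarith
  have h4 : ((#V : ℝ) * c) ^ 3 ≤ 1 := pow_le_one₀ (by positivity) h3
  rw [mul_pow, hc, mul_one_div, div_le_one (by positivity)] at h4
  rw [← hX, ← hB1e, ← hB2e]
  exact h4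

lemma chain3 {α β γ : Type*} [DecidableEq α] [DecidableEq β] [DecidableEq γ]
    (V : Finset α) (f : α → β) (g : α → γ) :
    (#V : ℝ) ^ 3 ≤ (∑ v ∈ V, (#{w ∈ V | f w = f v} : ℝ) * (#{w ∈ V | g w = g v} : ℝ))
      * #(V.image f) * #(V.image g) := by
  have h := holder3 V (fun v => (#{w ∈ V | f w = f v} : ℝ)) (fun v => (#{w ∈ V | g w = g v} : ℝ))
    (fun v hv => by
      have : 0 < #{w ∈ V | f w = f v} := Finset.card_pos.2 ⟨v, by simp [hv]⟩
      exact_mod_cast this)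
    (fun v hv => by
      have : 0 < #{w ∈ V | g w = g v} := Finset.card_pos.2 ⟨v, by simp [hv]⟩
      exact_mod_cast this)
  rw [sum_inv_fiber, sum_inv_fiber] at h
  exact h

lemma pairs_card {α β : Type*} [DecidableEq α] [DecidableEq β] (K : Finset α) (f : α → β) :
    #K ^ 2 ≤ #(K.image f) * #{p ∈ K ×ˢ K | f p.1 = f p.2} := by
  have h1 : #K = ∑ b ∈ K.image f, #{a ∈ K | f a = b} :=
    Finset.card_eq_sum_card_image f K
  have h2 : #{p ∈ K ×ˢ K | f p.1 = f p.2} = ∑ b ∈ K.image f, #{a ∈ K | f a = b} ^ 2 := by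
    rw [Finset.card_eq_sum_card_fiberwise (f := fun p => f p.1) (t := K.image f)]
    · refine Finset.sum_congr rfl fun b _ => ?_
      rw [sq, ← Finset.card_product]
      congr 1
      ext ⟨x, y⟩
      simp only [Finset.mem_filter, Finset.mem_product]
      constructor
      · rintro ⟨⟨⟨h1, h2⟩, h3⟩, h4⟩
        exact ⟨⟨h1, h4⟩, h2, by rw [← h3, h4]⟩
      · rintro ⟨⟨h1, h4⟩, h2, h3⟩
        exact ⟨⟨⟨h1, h2⟩, by rw [h3, h4]⟩, h4⟩
    · intro p hp
      simp only [Finset.coe_filter, Finset.mem_product, Set.mem_ofPred_eq] at hp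
      exact Finset.mem_coe.2 (Finset.mem_image_of_mem f hp.1.1)
  rw [h2]
  nth_rewrite 1 [h1]
  exact sq_sum_le_card_mul_sum_sq

/-- Katz–Tao sums-differences bound, exponent `2 - 1/6`. -/
lemma katz_tao (K : Finset ℤ) (s : ℤ → ℤ) (M : ℝ)
    (hP : (#(K.image fun k => s k + k) : ℝ) ≤ M)
    (hQ : (#(K.image fun k => s k - k) : ℝ) ≤ M)
    (hS : (#(K.image s) : ℝ) ≤ M) : (#K : ℝ) ^ 6 ≤ M ^ 11 := by
  have hM0 : 0 ≤ M := le_trans (Nat.cast_nonneg _) hP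
  set IP := K.image fun k => s k + k with hIP
  set IQ := K.image fun k => s k - k with hIQ
  set IS := K.image s with hIS
  set V : Finset (ℤ × ℤ) := {p ∈ K ×ˢ K | s p.1 + p.1 = s p.2 + p.2} with hV
  have hVmem : ∀ p : ℤ × ℤ, p ∈ V ↔ (p.1 ∈ K ∧ p.2 ∈ K) ∧ s p.1 + p.1 = s p.2 + p.2 := by
    intro p; simp [hV]
  have h1 : (#K : ℝ) ^ 2 ≤ M * #V := by
    have := pairs_card K (fun k => s k + k)
    calc (#K : ℝ) ^ 2 ≤ (#IP : ℝ) * #V := by exact_mod_cast this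
      _ ≤ M * #V := by gcongr
  let f : ℤ × ℤ → ℤ × ℤ := fun p => (s p.1 - p.1, s p.2 - p.2)
  let g : ℤ × ℤ → ℤ × ℤ := fun p => (s p.1 - p.1, s p.2)
  have hf : (#(V.image f) : ℝ) ≤ M * M := by
    have : V.image f ⊆ IQ ×ˢ IQ := by
      intro q hq
      obtain ⟨p, hp, rfl⟩ := Finset.mem_image.1 hq
      have := (hVmem p).1 hp
      exact Finset.mem_product.2 ⟨Finset.mem_image_of_mem (fun k => s k - k) this.1.1,
        Finset.mem_image_of_mem (fun k => s k - k) this.1.2⟩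
    have := Finset.card_le_card this
    rw [Finset.card_product] at this
    calc (#(V.image f) : ℝ) ≤ (#IQ : ℝ) * #IQ := by exact_mod_cast this
      _ ≤ M * M := by gcongr
  have hg : (#(V.image g) : ℝ) ≤ M * M := by
    have : V.image g ⊆ IQ ×ˢ IS := by
      intro q hq
      obtain ⟨p, hp, rfl⟩ := Finset.mem_image.1 hq
      have := (hVmem p).1 hp
      exact Finset.mem_product.2 ⟨Finset.mem_image_of_mem (fun k => s k - k) this.1.1,
        Finset.mem_image_of_mem s this.1.2⟩
    have := Finset.card_le_card this
    rw [Finset.card_product] at this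
    calc (#(V.image g) : ℝ) ≤ (#IQ : ℝ) * #IS := by exact_mod_cast this
      _ ≤ M * M := by gcongr
  have h2 := chain3 V f g
  -- the chains
  set T : Finset (Σ _ : ℤ × ℤ, (ℤ × ℤ) × (ℤ × ℤ)) :=
    V.sigma (fun v => ({w ∈ V | f w = f v} : Finset (ℤ × ℤ)) ×ˢ
      ({w ∈ V | g w = g v} : Finset (ℤ × ℤ))) with hT
  have hTc : (#T : ℝ) = ∑ v ∈ V, (#{w ∈ V | f w = f v} : ℝ) * (#{w ∈ V | g w = g v} : ℝ) := by
    rw [hT, Finset.card_sigma]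
    push_cast [Finset.card_product]
    rfl
  rw [← hTc] at h2
  have hTle : (#T : ℝ) ≤ M * M * (M * M) := by
    let F : (Σ _ : ℤ × ℤ, (ℤ × ℤ) × (ℤ × ℤ)) → (ℤ × ℤ) × (ℤ × ℤ) := fun x =>
      ((s x.2.1.1, s x.2.1.2), (s x.1.1 + x.1.1, s x.2.2.2 - x.2.2.2))
    have hle : #T ≤ #((IS ×ˢ IS) ×ˢ (IP ×ˢ IQ)) := by
      refine Finset.card_le_card_of_injOn F ?_ ?_
      · rintro ⟨⟨a1, b1⟩, ⟨a0, b0⟩, ⟨a2, b2⟩⟩ hx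
        simp only [hT, Finset.coe_sigma, Set.mem_sigma_iff, Finset.mem_coe, Finset.mem_product,
          Finset.mem_filter, hVmem] at hx
        obtain ⟨⟨⟨ha1, hb1⟩, -⟩, ⟨⟨⟨ha0, hb0⟩, -⟩, -⟩, ⟨⟨ha2, hb2⟩, -⟩, -⟩ := hx
        simp only [F, Finset.coe_product, Set.mem_prod, Finset.mem_coe]
        exact ⟨⟨Finset.mem_image_of_mem s ha0, Finset.mem_image_of_mem s hb0⟩,
          Finset.mem_image_of_mem (fun k => s k + k) ha1,
          Finset.mem_image_of_mem (fun k => s k - k) hb2⟩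
      · rintro ⟨⟨a1, b1⟩, ⟨a0, b0⟩, ⟨a2, b2⟩⟩ hx ⟨⟨c1, d1⟩, ⟨c0, d0⟩, ⟨c2, d2⟩⟩ hy hxy
        simp only [hT, Finset.coe_sigma, Set.mem_sigma_iff, Finset.mem_coe, Finset.mem_product,
          Finset.mem_filter, hVmem, f, g, Prod.mk.injEq] at hx hy
        simp only [F, Prod.mk.injEq] at hxy
        obtain ⟨⟨-, e1⟩, ⟨⟨-, e2⟩, e3, e4⟩, ⟨-, e5⟩, e6, e7⟩ := hx
        obtain ⟨⟨-, e1'⟩, ⟨⟨-, e2'⟩, e3', e4'⟩, ⟨-, e5'⟩, e6', e7'⟩ := hy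
        obtain ⟨⟨k1, k2⟩, k3, k4⟩ := hxy
        have hk : a2 = c2 := by omega
        subst hk
        have q0 : a0 = c0 := by omega
        have q1 : a1 = c1 := by omega
        have q2 : b0 = d0 := by omega
        have q3 : b1 = d1 := by omega
        have q4 : b2 = d2 := by omega
        subst q0 q1 q2 q3 q4
        rfl
    rw [Finset.card_product, Finset.card_product, Finset.card_product] at hle
    calc (#T : ℝ) ≤ (#IS : ℝ) * #IS * (#IP * #IQ) := by exact_mod_cast hle
      _ ≤ M * M * (M * M) := by gcongr
  calc (#K : ℝ) ^ 6 = ((#K : ℝ) ^ 2) ^ 3 := by ring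
    _ ≤ (M * #V) ^ 3 := by gcongr
    _ = M ^ 3 * (#V : ℝ) ^ 3 := by ring
    _ ≤ M ^ 3 * ((#T : ℝ) * #(V.image f) * #(V.image g)) := by gcongr
    _ ≤ M ^ 3 * (M * M * (M * M) * (M * M) * (M * M)) := by gcongr
    _ = M ^ 11 := by ring

end Comb

section Cov

lemma covNum_le_card {X : Type*} [PseudoMetricSpace X] {E : Set X} {ε : ℝ} (t : Finset X)
    (h : E ⊆ ⋃ x ∈ t, Metric.ball x ε) : (covNum E ε).toNat ≤ t.card :=
  ENat.toNat_le_of_le_natCast (iInf₂_le t h)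

lemma exists_cover {X : Type*} [PseudoMetricSpace X] {E : Set X} {ε : ℝ} (t : Finset X)
    (h : E ⊆ ⋃ x ∈ t, Metric.ball x ε) :
    ∃ t' : Finset X, E ⊆ (⋃ x ∈ t', Metric.ball x ε) ∧ t'.card ≤ (covNum E ε).toNat := by
  by_contra! hc
  have hfin : covNum E ε ≠ ⊤ :=
    ne_top_of_le_ne_top (ENat.natCast_ne_top t.card) (iInf₂_le t h)
  have h1 : (((covNum E ε).toNat + 1 : ℕ) : ℕ∞) ≤ covNum E ε :=
    le_iInf₂ fun t' ht' => by exact_mod_cast hc t' ht'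
  rw [← ENat.natCast_toNat hfin] at h1
  have h2 : (covNum E ε).toNat + 1 ≤ (covNum E ε).toNat := by
    simpa using (Nat.cast_le (α := ℕ∞)).1 h1
  omega

lemma ratio_le {X : Type*} [PseudoMetricSpace X] {E : Set X} {C a b : ℝ}
    (hab : a < b) (hb : 0 ≤ b)
    (h : ∀ᶠ ε in nhdsWithin (0 : ℝ) (Ioi 0),
      ((covNum E ε).toNat : ℝ) ≤ C * (1 / ε) ^ a) :
    ∀ᶠ ε in nhdsWithin (0 : ℝ) (Ioi 0),
      Real.log ((covNum E ε).toNat) / Real.log (1 / ε) ≤ b := by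
  have hinv : Tendsto (fun ε : ℝ => 1 / ε) (nhdsWithin (0 : ℝ) (Ioi 0)) atTop := by
    simpa using tendsto_inv_nhdsGT_zero (𝕜 := ℝ)
  have h1 : ∀ᶠ ε in nhdsWithin (0 : ℝ) (Ioi 0), C ≤ (1 / ε) ^ (b - a) :=
    ((tendsto_rpow_atTop (sub_pos.2 hab)).comp hinv).eventually_ge_atTop C
  have h2 : ∀ᶠ ε in nhdsWithin (0 : ℝ) (Ioi 0), 1 < 1 / ε := hinv.eventually_gt_atTop 1
  filter_upwards [h, h1, h2] with ε h h1 h2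
  have hlog : 0 < Real.log (1 / ε) := Real.log_pos h2
  have hpos : 0 < 1 / ε := by linarith
  rw [div_le_iff₀ hlog]
  rcases Nat.eq_zero_or_pos (covNum E ε).toNat with h0 | h0
  · rw [h0]; simp only [Nat.cast_zero, Real.log_zero]; positivity
  have h3 : ((covNum E ε).toNat : ℝ) ≤ (1 / ε) ^ b := by
    calc ((covNum E ε).toNat : ℝ) ≤ C * (1 / ε) ^ a := h
      _ ≤ (1 / ε) ^ (b - a) * (1 / ε) ^ a := by gcongr
      _ = (1 / ε) ^ b := by rw [← Real.rpow_add hpos]; ring_nf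
  calc Real.log ((covNum E ε).toNat) ≤ Real.log ((1 / ε) ^ b) :=
        Real.log_le_log (by exact_mod_cast h0) h3
    _ = b * Real.log (1 / ε) := Real.log_rpow hpos b

lemma ratio_nonneg {X : Type*} [PseudoMetricSpace X] (E : Set X) :
    ∀ᶠ ε in nhdsWithin (0 : ℝ) (Ioi 0),
      0 ≤ Real.log ((covNum E ε).toNat) / Real.log (1 / ε) := by
  have hinv : Tendsto (fun ε : ℝ => 1 / ε) (nhdsWithin (0 : ℝ) (Ioi 0)) atTop := by
    simpa using tendsto_inv_nhdsGT_zero (𝕜 := ℝ)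
  filter_upwards [hinv.eventually_gt_atTop 1] with ε h
  exact div_nonneg (Real.log_natCast_nonneg _) (Real.log_pos h).le

lemma dimM_le {X : Type*} [PseudoMetricSpace X] {E : Set X} {b : ℝ}
    (h : ∀ᶠ ε in nhdsWithin (0 : ℝ) (Ioi 0),
      Real.log ((covNum E ε).toNat) / Real.log (1 / ε) ≤ b) : dimM E ≤ b :=
  limsup_le_of_le (IsCoboundedUnder.of_frequently_ge (ratio_nonneg E).frequently) h

/-- grid for an interval -/
lemma interval_cover (R ε : ℝ) (hR : 0 ≤ R) (hε : 0 < ε) (hε1 : ε ≤ 1) :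
    ∃ F : Finset ℝ, Icc (-R) R ⊆ (⋃ x ∈ F, Metric.ball x ε) ∧
      (F.card : ℝ) ≤ (2 * R + 2) * (1 / ε) := by
  refine ⟨(Finset.Icc ⌊-R / ε⌋ ⌊R / ε⌋).image (fun k : ℤ => (k : ℝ) * ε), ?_, ?_⟩
  · intro x hx
    simp only [mem_iUnion]
    refine ⟨(⌊x / ε⌋ : ℝ) * ε, Finset.mem_image.2 ⟨⌊x / ε⌋, ?_, rfl⟩, ?_⟩
    · rw [Finset.mem_Icc]
      exact ⟨Int.floor_le_floor (by gcongr; exact hx.1), Int.floor_le_floor (by gcongr; exact hx.2)⟩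
    · rw [Metric.mem_ball, Real.dist_eq, abs_lt]
      have h1 := Int.floor_le (x / ε)
      have h2 := Int.lt_floor_add_one (x / ε)
      rw [le_div_iff₀ hε] at h1
      rw [div_lt_iff₀ hε] at h2
      constructor <;> nlinarith
  · have h1 : ((Finset.Icc ⌊-R / ε⌋ ⌊R / ε⌋).image (fun k : ℤ => (k : ℝ) * ε)).card
        ≤ (⌊R / ε⌋ + 1 - ⌊-R / ε⌋).toNat := by
      refine Finset.card_image_le.trans ?_
      rw [Int.card_Icc]
    have hle : ⌊-R / ε⌋ ≤ ⌊R / ε⌋ := Int.floor_le_floor (by gcongr; linarith)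
    have h2 : (((⌊R / ε⌋ + 1 - ⌊-R / ε⌋).toNat : ℤ) : ℝ) = ⌊R / ε⌋ + 1 - ⌊-R / ε⌋ := by
      rw [Int.toNat_of_nonneg (by omega)]; push_cast; ring
    have h3 := Int.floor_le (R / ε)
    have h4 := Int.lt_floor_add_one (-R / ε)
    have h5 : 1 ≤ 1 / ε := by rw [le_div_iff₀ hε]; linarith
    calc _ ≤ (((⌊R / ε⌋ + 1 - ⌊-R / ε⌋).toNat : ℕ) : ℝ) := by exact_mod_cast h1
      _ = ⌊R / ε⌋ + 1 - ⌊-R / ε⌋ := by rw [← h2]; norm_cast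
      _ ≤ R / ε + 1 - (-R / ε - 1) := by linarith
      _ = 2 * R * (1 / ε) + 2 := by field_simp; ring
      _ ≤ _ := by linarith

lemma prod_cover {E₁ E₂ : Set ℝ} {ε : ℝ} (hε : 0 < ε) (F₁ F₂ : Finset ℝ)
    (h₁ : E₁ ⊆ ⋃ x ∈ F₁, Metric.ball x ε) (h₂ : E₂ ⊆ ⋃ x ∈ F₂, Metric.ball x ε) :
    ∃ F : Finset (Fin 2 → ℝ), {y : Fin 2 → ℝ | y 0 ∈ E₁ ∧ y 1 ∈ E₂} ⊆
      (⋃ x ∈ F, Metric.ball x ε) ∧ F.card ≤ F₁.card * F₂.card := by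
  classical
  refine ⟨(F₁ ×ˢ F₂).image (fun p => ![p.1, p.2]), ?_, ?_⟩
  · rintro y ⟨hy0, hy1⟩
    obtain ⟨a, ha, hya⟩ := mem_iUnion₂.1 (h₁ hy0)
    obtain ⟨b, hb, hyb⟩ := mem_iUnion₂.1 (h₂ hy1)
    refine mem_iUnion₂.2 ⟨![a, b], Finset.mem_image.2 ⟨(a, b), by simp [ha, hb], rfl⟩, ?_⟩
    rw [Metric.mem_ball, dist_pi_lt_iff hε]
    intro i
    fin_cases i
    · simpa using hya
    · simpa using hyb
  · refine Finset.card_image_le.trans ?_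
    rw [Finset.card_product]

lemma bounded_cover {E : Set (Fin 2 → ℝ)} (hE : IsBounded E) :
    ∃ C : ℝ, ∀ ε : ℝ, 0 < ε → ε ≤ 1 → ∃ F : Finset (Fin 2 → ℝ),
      E ⊆ (⋃ x ∈ F, Metric.ball x ε) ∧ (F.card : ℝ) ≤ C * (1 / ε) ^ (2 : ℝ) := by
  obtain ⟨R, hR⟩ := hE.subset_closedBall 0
  have hE' : E ⊆ {y : Fin 2 → ℝ | y 0 ∈ Icc (-|R|) |R| ∧ y 1 ∈ Icc (-|R|) |R|} := by
    intro y hy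
    have h := hR hy
    rw [mem_closedBall_zero_iff] at h
    have h' : ‖y‖ ≤ |R| := h.trans (le_abs_self R)
    have h0 := (norm_le_pi_norm y 0).trans h'
    have h1 := (norm_le_pi_norm y 1).trans h'
    rw [Real.norm_eq_abs, abs_le] at h0 h1
    exact ⟨h0, h1⟩
  refine ⟨(2 * |R| + 2) ^ 2, fun ε hε hε1 => ?_⟩
  obtain ⟨F, hF, hFc⟩ := interval_cover |R| ε (abs_nonneg R) hε hε1
  obtain ⟨F', hF', hFc'⟩ := prod_cover hε F F hF hF
  refine ⟨F', hE'.trans hF', ?_⟩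
  calc (F'.card : ℝ) ≤ F.card * F.card := by exact_mod_cast hFc'
    _ ≤ ((2 * |R| + 2) * (1 / ε)) * ((2 * |R| + 2) * (1 / ε)) := by gcongr
    _ = _ := by rw [show (2 : ℝ) = ((2 : ℕ) : ℝ) by norm_num, Real.rpow_natCast]; push_cast; ring

lemma eventually_small {a : ℝ} (ha : 0 < a) : ∀ᶠ ε in nhdsWithin (0 : ℝ) (Ioi 0), 0 < ε ∧ ε ≤ a :=
  Ioc_mem_nhdsGT ha

lemma bounded_ratio {E : Set (Fin 2 → ℝ)} (hE : IsBounded E) :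
    ∀ᶠ ε in nhdsWithin (0 : ℝ) (Ioi 0),
      Real.log ((covNum E ε).toNat) / Real.log (1 / ε) ≤ 3 := by
  obtain ⟨C, hC⟩ := bounded_cover hE
  refine ratio_le (C := C) (a := 2) (by norm_num) (by norm_num) ?_
  filter_upwards [eventually_small one_pos] with ε hε
  obtain ⟨F, hF, hFc⟩ := hC ε hε.1 hε.2
  exact le_trans (by exact_mod_cast covNum_le_card F hF) hFc

end Cov

section Construction

/-- real number with base 8 digits 0,1 -/
noncomputable def Zr (e : ℕ → Bool) : ℝ :=
  Real.ofDigits (b := 8) (fun n => if e n then 1 else 0)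

lemma Zr_cont : Continuous Zr := by
  refine Real.continuous_ofDigits.comp (continuous_pi fun n => ?_)
  exact (continuous_of_discreteTopology (f := fun b : Bool => if b then (1 : Fin 8) else 0)).comp
    (continuous_apply n)

lemma Zr_mem (e : ℕ → Bool) : 0 ≤ Zr e ∧ Zr e ≤ 1 :=
  ⟨Real.ofDigits_nonneg _, Real.ofDigits_le_one _⟩

lemma digit_split (x : Fin 8) : ((x : ℕ) : ℝ) =
    4 * (((if decide (4 ≤ x.val) then (1 : Fin 8) else 0 : Fin 8) : ℕ) : ℝ)
    + 2 * (((if decide (2 ≤ x.val % 4) then (1 : Fin 8) else 0 : Fin 8) : ℕ) : ℝ)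
    + (((if decide (1 ≤ x.val % 2) then (1 : Fin 8) else 0 : Fin 8) : ℕ) : ℝ) := by
  have h : (x : ℕ) = 4 * ((if decide (4 ≤ x.val) then (1 : Fin 8) else 0 : Fin 8) : ℕ)
    + 2 * ((if decide (2 ≤ x.val % 4) then (1 : Fin 8) else 0 : Fin 8) : ℕ)
    + ((if decide (1 ≤ x.val % 2) then (1 : Fin 8) else 0 : Fin 8) : ℕ) := by
    revert x; decide
  exact_mod_cast h

lemma Zr_split (t : ℝ) (ht : t ∈ Icc (0 : ℝ) 1) :
    ∃ e₁ e₂ e₃ : ℕ → Bool, t = 4 * Zr e₁ + 2 * Zr e₂ + Zr e₃ := by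
  obtain ⟨d, -, rfl⟩ := Real.ofDigits_SurjOn (b := 8) (by norm_num) ht
  refine ⟨fun n => decide (4 ≤ (d n).val), fun n => decide (2 ≤ (d n).val % 4),
    fun n => decide (1 ≤ (d n).val % 2), ?_⟩
  unfold Zr Real.ofDigits
  rw [← tsum_mul_left, ← tsum_mul_left, ← Summable.tsum_add, ← Summable.tsum_add]
  · refine tsum_congr fun n => ?_
    unfold Real.ofDigitsTerm
    linear_combination (((8 : ℕ) : ℝ) ^ (n + 1))⁻¹ * digit_split (d n)
  · exact (Real.summable_ofDigitsTerm.mul_left _).add (Real.summable_ofDigitsTerm.mul_left _)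
  · exact Real.summable_ofDigitsTerm
  · exact Real.summable_ofDigitsTerm.mul_left _
  · exact Real.summable_ofDigitsTerm.mul_left _

/-- value set -/
noncomputable def Dset (c α β : ℝ) : Set ℝ :=
  range (fun p : (ℕ → Bool) × (ℕ → Bool) => c + α * Zr p.1 + β * Zr p.2)

lemma Dset_compact (c α β : ℝ) : IsCompact (Dset c α β) := by
  refine isCompact_range ?_
  have h1 := Zr_cont.comp (continuous_fst (X := ℕ → Bool) (Y := ℕ → Bool))
  have h2 := Zr_cont.comp (continuous_snd (X := ℕ → Bool) (Y := ℕ → Bool))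
  exact (continuous_const.add (continuous_const.mul h1)).add (continuous_const.mul h2)

/-- extension by false -/
def extB (n : ℕ) (p : Fin n → Bool) : ℕ → Bool := fun m => if h : m < n then p ⟨m, h⟩ else false

lemma Zr_ext (n : ℕ) (e : ℕ → Bool) :
    |Zr e - Zr (extB n (fun i => e i))| ≤ ((8 : ℝ) ^ n)⁻¹ := by
  have := Real.abs_ofDigits_sub_ofDigits_le (b := 8) (n := n)
    (x := fun m => if e m then 1 else 0)
    (y := fun m => if extB n (fun i => e i) m then 1 else 0) ?_
  · simpa [Zr] using this
  · intro i hi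
    simp [extB, hi]

lemma Dset_cover (c α β : ℝ) (hα : |α| ≤ 4) (hβ : |β| ≤ 4) (n : ℕ) (ε : ℝ)
    (hε : 8 * ((8 : ℝ) ^ n)⁻¹ < ε) :
    ∃ F : Finset ℝ, Dset c α β ⊆ (⋃ x ∈ F, Metric.ball x ε) ∧ F.card ≤ 4 ^ n := by
  refine ⟨(Finset.univ : Finset ((Fin n → Bool) × (Fin n → Bool))).image
    (fun p => c + α * Zr (extB n p.1) + β * Zr (extB n p.2)), ?_, ?_⟩
  · rintro _ ⟨⟨e, e'⟩, rfl⟩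
    refine mem_iUnion₂.2 ⟨_, Finset.mem_image.2 ⟨(fun i => e i, fun i => e' i),
      Finset.mem_univ _, rfl⟩, ?_⟩
    rw [Metric.mem_ball, Real.dist_eq]
    refine lt_of_le_of_lt ?_ hε
    have h1 := Zr_ext n e
    have h2 := Zr_ext n e'
    set δ := ((8 : ℝ) ^ n)⁻¹
    calc _ = |α * (Zr e - Zr (extB n (fun i => e i))) + β * (Zr e' - Zr (extB n (fun i => e' i)))| := by
          congr 1; ring
      _ ≤ |α * (Zr e - Zr (extB n (fun i => e i)))| + |β * (Zr e' - Zr (extB n (fun i => e' i)))| :=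
          abs_add_le _ _
      _ ≤ 4 * δ + 4 * δ := by rw [abs_mul, abs_mul]; gcongr
      _ = 8 * δ := by ring
  · refine Finset.card_image_le.trans ?_
    simp [← mul_pow]

/-- the union of the four value sets -/
noncomputable def Dall : Set ℝ :=
  Dset 2 4 4 ∪ Dset (-2) 4 2 ∪ (Dset 2 2 (-1) ∪ Dset (-2) (-2) 1)

lemma Dall_cover (n : ℕ) (ε : ℝ) (hε : 8 * ((8 : ℝ) ^ n)⁻¹ < ε) :
    ∃ F : Finset ℝ, Dall ⊆ (⋃ x ∈ F, Metric.ball x ε) ∧ F.card ≤ 4 * 4 ^ n := by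
  classical
  obtain ⟨F1, h1, c1⟩ := Dset_cover 2 4 4 (by norm_num) (by norm_num) n ε hε
  obtain ⟨F2, h2, c2⟩ := Dset_cover (-2) 4 2 (by norm_num) (by norm_num) n ε hε
  obtain ⟨F3, h3, c3⟩ := Dset_cover 2 2 (-1) (by norm_num) (by norm_num) n ε hε
  obtain ⟨F4, h4, c4⟩ := Dset_cover (-2) (-2) 1 (by norm_num) (by norm_num) n ε hε
  refine ⟨(F1 ∪ F2) ∪ (F3 ∪ F4), ?_, ?_⟩
  · rw [Finset.set_biUnion_union, Finset.set_biUnion_union, Finset.set_biUnion_union]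
    exact union_subset_union (union_subset_union h1 h2) (union_subset_union h3 h4)
  · have := Finset.card_union_le (F1 ∪ F2) (F3 ∪ F4)
    have := Finset.card_union_le F1 F2
    have := Finset.card_union_le F3 F4
    omega

lemma Dall_compact : IsCompact Dall :=
  ((Dset_compact _ _ _).union (Dset_compact _ _ _)).union
    ((Dset_compact _ _ _).union (Dset_compact _ _ _))

lemma Dall_sub : Dall ⊆ Icc (-10) 10 := by
  rintro x ((⟨⟨e, e'⟩, rfl⟩ | ⟨⟨e, e'⟩, rfl⟩) | (⟨⟨e, e'⟩, rfl⟩ | ⟨⟨e, e'⟩, rfl⟩)) <;>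
  · have h1 := Zr_mem e
    have h2 := Zr_mem e'
    constructor <;> dsimp only <;> linarith

/-- the compact set of part (ii) -/
noncomputable def Bset : Set (Fin 2 → ℝ) :=
  {y | y 0 ∈ Dall ∧ y 1 ∈ Icc (-10 : ℝ) 10} ∪ {y | y 0 ∈ Icc (-10 : ℝ) 10 ∧ y 1 ∈ Dall}

lemma Bset_compact : IsCompact Bset := by
  have hc : IsClosed Bset :=
    ((Dall_compact.isClosed.preimage (continuous_apply 0)).inter
      (isClosed_Icc.preimage (continuous_apply 1))).union
    ((isClosed_Icc.preimage (continuous_apply 0)).inter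
      (Dall_compact.isClosed.preimage (continuous_apply 1)))
  refine (isCompact_closedBall (0 : Fin 2 → ℝ) 10).of_isClosed_subset hc ?_
  intro y hy
  have : y 0 ∈ Icc (-10 : ℝ) 10 ∧ y 1 ∈ Icc (-10 : ℝ) 10 := by
    rcases hy with h | h
    · exact ⟨Dall_sub h.1, h.2⟩
    · exact ⟨h.1, Dall_sub h.2⟩
  rw [mem_closedBall_zero_iff, pi_norm_le_iff_of_nonneg (by norm_num)]
  intro i
  rw [Real.norm_eq_abs, abs_le]
  fin_cases i
  · exact this.1
  · exact this.2

lemma Bset_squares (t : ℝ) (ht : t ∈ Icc (0 : ℝ) 1) :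
    ∃ s > (0 : ℝ), squareBdry ![t, 0] s ⊆ Bset := by
  obtain ⟨e₁, e₂, e₃, h⟩ := Zr_split t ht
  have h1 := Zr_mem e₁
  have h2 := Zr_mem e₂
  have h3 := Zr_mem e₃
  refine ⟨2 + 2 * Zr e₂ - Zr e₃, by linarith, ?_⟩
  intro y hy
  have hy : max |y 0 - t| |y 1| = 2 + 2 * Zr e₂ - Zr e₃ := by
    simpa [squareBdry] using hy
  have hy0 : |y 0 - t| ≤ 2 + 2 * Zr e₂ - Zr e₃ := hy ▸ le_max_left _ _
  have hy1 : |y 1| ≤ 2 + 2 * Zr e₂ - Zr e₃ := hy ▸ le_max_right _ _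
  obtain ⟨ht0, ht1⟩ := ht
  rcases max_choice |y 0 - t| |y 1| with hm | hm
  · rw [hm] at hy
    rw [abs_le] at hy1
    refine Or.inl ⟨?_, by constructor <;> linarith⟩
    rcases abs_eq (by linarith) |>.1 hy with h' | h'
    · exact Or.inl (Or.inl ⟨(e₁, e₂), by dsimp only; linarith⟩)
    · exact Or.inl (Or.inr ⟨(e₁, e₃), by dsimp only; linarith⟩)
  · rw [hm] at hy
    rw [abs_le] at hy0
    refine Or.inr ⟨by constructor <;> linarith, ?_⟩
    rcases abs_eq (by linarith) |>.1 hy with h' | h'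
    · exact Or.inr (Or.inl ⟨(e₂, e₃), by dsimp only; linarith⟩)
    · exact Or.inr (Or.inr ⟨(e₂, e₃), by dsimp only; linarith⟩)

lemma Bset_dim : dimM Bset ≤ 7 / 4 := by
  classical
  refine dimM_le (ratio_le (C := 8 * 22 * 128 ^ ((2 : ℝ) / 3)) (a := 5 / 3)
    (by norm_num) (by norm_num) ?_)
  filter_upwards [eventually_small one_pos] with ε hε
  obtain ⟨hε0, hε1⟩ := hε
  obtain ⟨n, hn1, hn2⟩ := exists_nat_pow_near_of_lt_one (x := ε / 16) (y := (1 / 8 : ℝ))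
    (by positivity) (by linarith) (by norm_num) (by norm_num)
  have hp : (0 : ℝ) < 8 ^ (n + 1) := by positivity
  have hn1' : 8 * ((8 : ℝ) ^ (n + 1))⁻¹ < ε := by
    rw [one_div, inv_pow] at hn1
    have : 0 < ((8 : ℝ) ^ (n + 1))⁻¹ := by positivity
    linarith
  have hn2' : (8 : ℝ) ^ (n + 1) ≤ 128 * (1 / ε) := by
    rw [one_div, inv_pow, le_inv_comm₀ (by positivity) (by positivity)] at hn2
    calc (8 : ℝ) ^ (n + 1) = 8 * 8 ^ n := by ring
      _ ≤ 8 * (ε / 16)⁻¹ := by gcongr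
      _ = 128 * (1 / ε) := by field_simp; norm_num
  have h4 : (4 : ℝ) ^ (n + 1) ≤ 128 ^ ((2 : ℝ) / 3) * (1 / ε) ^ ((2 : ℝ) / 3) := by
    have e8 : (4 : ℝ) = 8 ^ ((2 : ℝ) / 3) := by
      rw [show (8 : ℝ) = 2 ^ (3 : ℝ) by norm_num, ← Real.rpow_mul (by norm_num)]
      norm_num
    calc (4 : ℝ) ^ (n + 1) = ((8 : ℝ) ^ (n + 1)) ^ ((2 : ℝ) / 3) := by
          nth_rewrite 1 [e8]
          rw [← Real.rpow_natCast, ← Real.rpow_natCast, ← Real.rpow_mul (by norm_num),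
            ← Real.rpow_mul (by norm_num), mul_comm]
      _ ≤ (128 * (1 / ε)) ^ ((2 : ℝ) / 3) := by gcongr
      _ = _ := Real.mul_rpow (by norm_num) (by positivity)
  obtain ⟨F, hF, hFc⟩ := Dall_cover (n + 1) ε hn1'
  obtain ⟨I, hI, hIc⟩ := interval_cover 10 ε (by norm_num) hε0 hε1
  obtain ⟨G1, hG1, hG1c⟩ := prod_cover hε0 F I hF hI
  obtain ⟨G2, hG2, hG2c⟩ := prod_cover hε0 I F hI hF
  have hcov : Bset ⊆ ⋃ x ∈ G1 ∪ G2, Metric.ball x ε := by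
    rw [Finset.set_biUnion_union]
    exact union_subset_union hG1 hG2
  have hc := (covNum_le_card _ hcov).trans (Finset.card_union_le G1 G2)
  have hc2 : (covNum Bset ε).toNat ≤ 2 * (F.card * I.card) := by
    rw [mul_comm I.card] at hG2c; omega
  have hinv : 0 < 1 / ε := by positivity
  have hFc' : (F.card : ℝ) ≤ 4 * (128 ^ ((2 : ℝ) / 3) * (1 / ε) ^ ((2 : ℝ) / 3)) := by
    calc (F.card : ℝ) ≤ 4 * 4 ^ (n + 1) := by exact_mod_cast hFc
      _ ≤ _ := by gcongr
  calc ((covNum Bset ε).toNat : ℝ) ≤ 2 * (F.card * I.card) := by exact_mod_cast hc2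
    _ ≤ 2 * ((4 * (128 ^ ((2 : ℝ) / 3) * (1 / ε) ^ ((2 : ℝ) / 3))) * ((2 * 10 + 2) * (1 / ε))) := by
        gcongr
    _ = 8 * 22 * 128 ^ ((2 : ℝ) / 3) * ((1 / ε) ^ ((2 : ℝ) / 3) * (1 / ε) ^ (1 : ℝ)) := by
        rw [Real.rpow_one]; ring
    _ = _ := by rw [← Real.rpow_add hinv]; norm_num

end Construction

section Lower

/-- counting cells in a set covered by few balls and containing long segments -/
lemma cell_count (F : Finset (Fin 2 → ℝ)) (ε a b : ℝ) (hε : 0 < ε) (hab : a < b)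
    (hεab : 2 * ε ≤ b - a) (i j : Fin 2) (A : Finset ℤ)
    (h : ∀ m ∈ A, ∀ y ∈ Icc a b, ∃ z : Fin 2 → ℝ, (∃ x ∈ F, dist z x ≤ ε) ∧
      ⌊z i / ε⌋ = m ∧ z j = y) :
    (A.card : ℝ) ≤ 18 * F.card * ε * (1 / (b - a)) := by
  classical
  set L : Finset ℤ := Finset.Icc ⌈a / ε⌉ ⌊b / ε⌋ with hL
  have hfl : ∀ u v : ℝ, |u - v| ≤ ε → ⌊u / ε⌋ - ⌊v / ε⌋ ∈ Finset.Icc (-1 : ℤ) 1 := by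
    intro u v huv
    rw [abs_le] at huv
    have h1 : u / ε ≤ v / ε + 1 := by rw [div_add_one hε.ne']; gcongr; linarith
    have h2 : v / ε ≤ u / ε + 1 := by rw [div_add_one hε.ne']; gcongr; linarith
    have h1' := Int.floor_le_floor h1
    have h2' := Int.floor_le_floor h2
    rw [Int.floor_add_one] at h1' h2'
    rw [Finset.mem_Icc]
    omega
  have hsub : A ×ˢ L ⊆ (F ×ˢ (Finset.Icc (-1 : ℤ) 1 ×ˢ Finset.Icc (-1 : ℤ) 1)).image
      (fun q => (⌊q.1 i / ε⌋ + q.2.1, ⌊q.1 j / ε⌋ + q.2.2)) := by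
    rintro ⟨m, l⟩ hml
    rw [Finset.mem_product, hL, Finset.mem_Icc, Int.ceil_le, Int.le_floor, div_le_iff₀ hε,
      le_div_iff₀ hε] at hml
    obtain ⟨hm, hl1, hl2⟩ := hml
    obtain ⟨z, ⟨x, hx, hzx⟩, hz1, hz2⟩ := h m hm (l * ε) ⟨hl1, hl2⟩
    have hzl : ⌊z j / ε⌋ = l := by
      rw [hz2, mul_div_assoc, div_self hε.ne', mul_one, Int.floor_intCast]
    have d1 : |z i - x i| ≤ ε := by
      rw [← Real.dist_eq]; exact (dist_le_pi_dist z x i).trans hzx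
    have d2 : |z j - x j| ≤ ε := by
      rw [← Real.dist_eq]; exact (dist_le_pi_dist z x j).trans hzx
    refine Finset.mem_image.2 ⟨(x, (⌊z i / ε⌋ - ⌊x i / ε⌋, ⌊z j / ε⌋ - ⌊x j / ε⌋)), ?_, ?_⟩
    · exact Finset.mem_product.2 ⟨hx, Finset.mem_product.2 ⟨hfl _ _ d1, hfl _ _ d2⟩⟩
    · simp [hz1, hzl]
  have hc := (Finset.card_le_card hsub).trans Finset.card_image_le
  rw [Finset.card_product, Finset.card_product, Finset.card_product] at hc
  have h3 : (Finset.Icc (-1 : ℤ) 1).card = 3 := by decide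
  rw [h3] at hc
  have hc' : (A.card : ℝ) * L.card ≤ F.card * 9 := by exact_mod_cast hc
  have hLc : (b - a) / (2 * ε) ≤ L.card := by
    have e1 : (⌊b / ε⌋ + 1 - ⌈a / ε⌉ : ℤ) ≤ (L.card : ℤ) := by
      rw [hL, Int.card_Icc]; exact Int.self_le_toNat _
    have e2 : ((⌊b / ε⌋ : ℝ) + 1 - ⌈a / ε⌉) ≤ L.card := by exact_mod_cast e1
    have e3 := Int.lt_floor_add_one (b / ε)
    have e4 := Int.ceil_lt_add_one (a / ε)
    have e5 : 1 ≤ (b - a) / (2 * ε) := by rw [le_div_iff₀ (by positivity)]; linarith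
    have e6 : b / ε - a / ε = 2 * ((b - a) / (2 * ε)) := by field_simp
    linarith
  have hba : 0 < b - a := by linarith
  have h5 : (A.card : ℝ) * ((b - a) / (2 * ε)) ≤ F.card * 9 :=
    le_trans (by gcongr) hc'
  rw [← mul_div_assoc, div_le_iff₀ (by positivity)] at h5
  rw [mul_one_div, le_div_iff₀ hba]
  linarith

lemma scale_bound (T : Set ℝ) (hT : T ⊆ Icc 0 1) (s : ℝ → ℝ) (ε M : ℝ) (hε : 0 < ε)
    (hP : ∀ A : Finset ℤ, (∀ m ∈ A, ∃ t ∈ T, ⌊(t + s t) / ε⌋ = m) → (A.card : ℝ) ≤ M)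
    (hQ : ∀ A : Finset ℤ, (∀ m ∈ A, ∃ t ∈ T, ⌊(t - s t) / ε⌋ = m) → (A.card : ℝ) ≤ M)
    (hS : ∀ A : Finset ℤ, (∀ m ∈ A, ∃ t ∈ T, ⌊s t / ε⌋ = m) → (A.card : ℝ) ≤ M) :
    ((MeasureTheory.volume T).toReal * (1 / ε)) ^ 6 ≤ (2 * M) ^ 11 := by
  classical
  have hfin : ((fun t : ℝ => ⌊t / ε⌋) '' T).Finite := by
    refine (Set.finite_Icc (⌊0 / ε⌋ : ℤ) ⌊1 / ε⌋).subset ?_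
    rintro _ ⟨t, ht, rfl⟩
    exact ⟨Int.floor_le_floor (by gcongr; exact (hT ht).1),
      Int.floor_le_floor (by gcongr; exact (hT ht).2)⟩
  set K : Finset ℤ := hfin.toFinset with hK
  have hKm : ∀ k ∈ K, ∃ t, t ∈ T ∧ ⌊t / ε⌋ = k := by
    intro k hk
    simpa [hK] using hk
  choose! τ hτT hτ using hKm
  have hM0 : 0 ≤ M := le_trans (by simp) (hP ∅ (by simp))
  have hvol : (MeasureTheory.volume T).toReal * (1 / ε) ≤ K.card := by
    have hsub : T ⊆ ⋃ k ∈ K, Icc ((k : ℝ) * ε) ((k + 1) * ε) := by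
      intro t ht
      refine mem_iUnion₂.2 ⟨⌊t / ε⌋, ?_, ?_⟩
      · rw [hK, Set.Finite.mem_toFinset]; exact ⟨t, ht, rfl⟩
      · have h1 := Int.floor_le (t / ε)
        have h2 := Int.lt_floor_add_one (t / ε)
        rw [le_div_iff₀ hε] at h1
        rw [div_lt_iff₀ hε] at h2
        exact ⟨h1, h2.le⟩
    have h1 : MeasureTheory.volume T ≤ ∑ k ∈ K, ENNReal.ofReal ε := by
      refine (MeasureTheory.measure_mono hsub).trans
        ((MeasureTheory.measure_biUnion_finset_le K _).trans ?_)
      refine Finset.sum_le_sum fun k _ => ?_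
      rw [Real.volume_Icc]
      exact le_of_eq (by congr 1; ring)
    rw [Finset.sum_const, nsmul_eq_mul] at h1
    have h2 := ENNReal.toReal_mono (by finiteness) h1
    rw [ENNReal.toReal_mul, ENNReal.toReal_ofReal hε.le, ENNReal.toReal_natCast] at h2
    rw [mul_one_div, div_le_iff₀ hε]
    exact h2
  have htwo : ∀ (g h : ℤ → ℤ), (∀ k ∈ K, g k = h k ∨ g k = h k - 1) →
      ((K.image h).card : ℝ) ≤ M → ((K.image g).card : ℝ) ≤ 2 * M := by
    intro g h hgh hc
    have hsub : K.image g ⊆ K.image h ∪ (K.image h).image (fun m => m - 1) := by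
      intro m hm
      obtain ⟨k, hk, rfl⟩ := Finset.mem_image.1 hm
      rw [Finset.mem_union]
      rcases hgh k hk with e | e
      · exact Or.inl (e ▸ Finset.mem_image_of_mem h hk)
      · refine Or.inr (Finset.mem_image.2 ⟨h k, Finset.mem_image_of_mem h hk, e.symm⟩)
    have h1 := (Finset.card_le_card hsub).trans (Finset.card_union_le _ _)
    have h2 : ((K.image h).image (fun m => m - 1)).card ≤ (K.image h).card :=
      Finset.card_image_le
    have h3 : (K.image g).card ≤ 2 * (K.image h).card := by omega
    calc ((K.image g).card : ℝ) ≤ 2 * (K.image h).card := by exact_mod_cast h3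
      _ ≤ 2 * M := by gcongr
  have key := katz_tao K (fun k => ⌊s (τ k) / ε⌋) (2 * M) ?_ ?_ ?_
  · refine le_trans ?_ key
    gcongr
  · refine htwo _ (fun k => ⌊(τ k + s (τ k)) / ε⌋) ?_ (hP _ ?_)
    · intro k hk
      rw [add_div]
      have h1 := Int.le_floor_add (τ k / ε) (s (τ k) / ε)
      have h2 := Int.le_floor_add_floor (τ k / ε) (s (τ k) / ε)
      rw [hτ k hk] at h1 h2
      omega
    · intro m hm
      obtain ⟨k, hk, rfl⟩ := Finset.mem_image.1 hm
      exact ⟨τ k, hτT k hk, rfl⟩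
  · have hneg : K.image (fun k => ⌊s (τ k) / ε⌋ - k)
        = (K.image (fun k => k - ⌊s (τ k) / ε⌋ - 1)).image (fun m => - m - 1) := by
      rw [Finset.image_image]
      refine Finset.image_congr fun k _ => ?_
      simp only [Function.comp]
      ring
    rw [hneg]
    refine le_trans (Nat.cast_le.2 Finset.card_image_le) ?_
    refine htwo _ (fun k => ⌊(τ k - s (τ k)) / ε⌋) ?_ (hQ _ ?_)
    · intro k hk
      have h1 := Int.le_floor_add (τ k / ε - s (τ k) / ε) (s (τ k) / ε)
      have h2 := Int.le_floor_add_floor (τ k / ε - s (τ k) / ε) (s (τ k) / ε)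
      rw [sub_add_cancel, hτ k hk] at h1 h2
      rw [sub_div]
      omega
    · intro m hm
      obtain ⟨k, hk, rfl⟩ := Finset.mem_image.1 hm
      exact ⟨τ k, hτT k hk, rfl⟩
  · refine le_trans (hS _ ?_) (by linarith)
    intro m hm
    obtain ⟨k, hk, rfl⟩ := Finset.mem_image.1 hm
    exact ⟨τ k, hτT k hk, rfl⟩

lemma baire_segment (g : ℕ → Set (Fin 2 → ℝ)) (hg : ∀ j, IsClosed (g j)) (γ : ℝ → Fin 2 → ℝ)
    (hγ : Continuous γ) (l r : ℝ) (hs : l < r) (h : ∀ y ∈ Icc l r, γ y ∈ ⋃ j, g j) :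
    ∃ (j : ℕ) (a b : ℚ), (a : ℝ) < b ∧ ∀ y ∈ Icc (a : ℝ) b, γ y ∈ g j := by
  have hd : Dense (⋃ j, interior (γ ⁻¹' (g j) ∪ (Ioo l r)ᶜ)) := by
    refine dense_iUnion_interior_of_closed (fun j => ((hg j).preimage hγ).union
      isOpen_Ioo.isClosed_compl) ?_
    refine eq_univ_of_forall fun y => ?_
    by_cases hy : y ∈ Ioo l r
    · obtain ⟨j, hj⟩ := mem_iUnion.1 (h y (Ioo_subset_Icc_self hy))
      exact mem_iUnion.2 ⟨j, Or.inl hj⟩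
    · exact mem_iUnion.2 ⟨0, Or.inr hy⟩
  obtain ⟨y, hy, hyU⟩ := hd.inter_open_nonempty (Ioo l r) isOpen_Ioo (nonempty_Ioo.2 hs)
  obtain ⟨j, hj⟩ := mem_iUnion.1 hyU
  have hopen : IsOpen (Ioo l r ∩ interior (γ ⁻¹' (g j) ∪ (Ioo l r)ᶜ)) :=
    isOpen_Ioo.inter isOpen_interior
  obtain ⟨δ, hδ, hball⟩ := Metric.isOpen_iff.1 hopen y ⟨hy, hj⟩
  obtain ⟨a, ha1, ha2⟩ := exists_rat_btwn (show y - δ < y by linarith)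
  obtain ⟨b, hb1, hb2⟩ := exists_rat_btwn (show y < y + δ by linarith)
  refine ⟨j, a, b, by linarith, fun z hz => ?_⟩
  have hz' := hball (show z ∈ Metric.ball y δ by
    rw [Real.ball_eq_Ioo]; exact ⟨by linarith [hz.1], by linarith [hz.2]⟩)
  rcases interior_subset hz'.2 with h' | h'
  · exact h'
  · exact absurd hz'.1 h'

lemma eventually_cover {E : Set (Fin 2 → ℝ)} (hE : IsBounded E) {α : ℝ} (hα0 : 0 ≤ α)
    (hα : dimM E < α) :
    ∀ᶠ ε in nhdsWithin (0 : ℝ) (Ioi 0), ∃ F : Finset (Fin 2 → ℝ),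
      (∀ z ∈ closure E, ∃ x ∈ F, dist z x ≤ ε) ∧ (F.card : ℝ) ≤ (1 / ε) ^ α := by
  have h1 := eventually_lt_of_limsup_lt hα (isBoundedUnder_of_eventually_le (bounded_ratio hE))
  obtain ⟨C, hC⟩ := bounded_cover hE
  filter_upwards [h1, eventually_small (show (0 : ℝ) < 1 / 2 by norm_num)] with ε h1 hε
  obtain ⟨F₀, hF₀, -⟩ := hC ε hε.1 (by linarith [hε.2])
  obtain ⟨F, hF, hFc⟩ := exists_cover F₀ hF₀
  refine ⟨F, ?_, ?_⟩
  · have hcl : IsClosed (⋃ x ∈ F, Metric.closedBall x ε) :=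
      F.finite_toSet.isClosed_biUnion fun x _ => Metric.isClosed_closedBall
    have hsub : closure E ⊆ ⋃ x ∈ F, Metric.closedBall x ε :=
      closure_minimal (hF.trans (iUnion₂_mono fun x _ => Metric.ball_subset_closedBall)) hcl
    intro z hz
    obtain ⟨x, hx, hzx⟩ := mem_iUnion₂.1 (hsub hz)
    exact ⟨x, hx, hzx⟩
  · have hinv : (1 : ℝ) < 1 / ε := by rw [lt_div_iff₀ hε.1]; linarith [hε.2]
    have hpos : (0 : ℝ) < 1 / ε := by linarith
    have hlog : 0 < Real.log (1 / ε) := Real.log_pos hinv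
    rw [div_lt_iff₀ hlog] at h1
    refine le_trans (Nat.cast_le.2 hFc) ?_
    rcases Nat.eq_zero_or_pos (covNum E ε).toNat with h0 | h0
    · rw [h0]; simp only [Nat.cast_zero]; positivity
    · have hn : (0 : ℝ) < (covNum E ε).toNat := by exact_mod_cast h0
      rw [← Real.log_rpow hpos] at h1
      exact ((Real.log_lt_log_iff hn (by positivity)).1 h1).le

lemma lower_bound (B : Set (Fin 2 → ℝ))
    (hB : ∀ t ∈ Icc (0 : ℝ) 1, ∃ s > (0 : ℝ), squareBdry ![t, 0] s ⊆ B)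
    (f : ℕ → Set (Fin 2 → ℝ)) (hBf : B ⊆ ⋃ j, f j) (hf : ∀ j, IsBounded (f j))
    (α : ℝ) (hα0 : 0 ≤ α) (hα : ∀ j, dimM (f j) < α) : (17 : ℝ) / 11 ≤ α := by
  by_contra! hlt
  choose! s hs hsB using hB
  have hcov : ∀ z ∈ B, z ∈ ⋃ j, closure (f j) := fun z hz =>
    iUnion_mono (fun j => subset_closure) (hBf hz)
  let T : (ℕ × ℚ × ℚ) × (ℕ × ℚ × ℚ) × (ℕ × ℚ × ℚ) → Set ℝ := fun q =>
    {t | t ∈ Icc (0 : ℝ) 1 ∧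
      ((q.1.2.1 : ℝ) < q.1.2.2 ∧ ∀ y ∈ Icc (q.1.2.1 : ℝ) q.1.2.2,
        ![t + s t, y] ∈ closure (f q.1.1)) ∧
      ((q.2.1.2.1 : ℝ) < q.2.1.2.2 ∧ ∀ y ∈ Icc (q.2.1.2.1 : ℝ) q.2.1.2.2,
        ![t - s t, y] ∈ closure (f q.2.1.1)) ∧
      ((q.2.2.2.1 : ℝ) < q.2.2.2.2 ∧ ∀ y ∈ Icc (q.2.2.2.1 : ℝ) q.2.2.2.2,
        ![y, s t] ∈ closure (f q.2.2.1))}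
  have hTcov : Icc (0 : ℝ) 1 ⊆ ⋃ q, T q := by
    intro t ht
    have hst := hs t ht
    obtain ⟨j1, a1, b1, hab1, h1⟩ := baire_segment (fun j => closure (f j))
      (fun j => isClosed_closure) (fun y => ![t + s t, y]) (by fun_prop) (-s t) (s t) (by linarith) (by
        intro y hy
        refine hcov _ (hsB t ht ?_)
        simp [squareBdry, abs_of_pos hst, abs_le.2 hy])
    obtain ⟨j2, a2, b2, hab2, h2⟩ := baire_segment (fun j => closure (f j))
      (fun j => isClosed_closure) (fun y => ![t - s t, y]) (by fun_prop) (-s t) (s t) (by linarith) (by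
        intro y hy
        refine hcov _ (hsB t ht ?_)
        simp [squareBdry, abs_of_pos hst, abs_le.2 hy])
    obtain ⟨j3, a3, b3, hab3, h3⟩ := baire_segment (fun j => closure (f j))
      (fun j => isClosed_closure) (fun y => ![y, s t]) (by fun_prop) (t - s t) (t + s t) (by linarith) (by
        intro y hy
        refine hcov _ (hsB t ht ?_)
        have : |y - t| ≤ s t := abs_le.2 ⟨by linarith [hy.1], by linarith [hy.2]⟩
        simp [squareBdry, abs_of_pos hst, this])
    exact mem_iUnion.2 ⟨((j1, a1, b1), (j2, a2, b2), (j3, a3, b3)), ht, ⟨hab1, h1⟩,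
      ⟨hab2, h2⟩, ⟨hab3, h3⟩⟩
  obtain ⟨q, hq⟩ : ∃ q, MeasureTheory.volume (T q) ≠ 0 := by
    by_contra! hall
    have h0 : MeasureTheory.volume (⋃ q, T q) = 0 := MeasureTheory.measure_iUnion_null hall
    have h1 := MeasureTheory.measure_mono_null hTcov h0
    simp at h1
  have hTsub : T q ⊆ Icc 0 1 := fun t ht => ht.1
  obtain ⟨t₀, ht₀⟩ : (T q).Nonempty := MeasureTheory.nonempty_of_measure_ne_zero hq
  have hfinv : MeasureTheory.volume (T q) ≠ ⊤ :=
    ne_top_of_le_ne_top (by simp) (MeasureTheory.measure_mono hTsub)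
  set v := (MeasureTheory.volume (T q)).toReal with hv
  have hvpos : 0 < v := ENNReal.toReal_pos hq hfinv
  obtain ⟨⟨j1, a1, b1⟩, ⟨j2, a2, b2⟩, ⟨j3, a3, b3⟩⟩ := q
  have hab1 : (a1 : ℝ) < b1 := ht₀.2.1.1
  have hab2 : (a2 : ℝ) < b2 := ht₀.2.2.1.1
  have hab3 : (a3 : ℝ) < b3 := ht₀.2.2.2.1
  set W : ℝ := 1 / ((b1 : ℝ) - a1) + 1 / ((b2 : ℝ) - a2) + 1 / ((b3 : ℝ) - a3) with hW
  have hw1 : 0 < 1 / ((b1 : ℝ) - a1) := one_div_pos.2 (by linarith)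
  have hw2 : 0 < 1 / ((b2 : ℝ) - a2) := one_div_pos.2 (by linarith)
  have hw3 : 0 < 1 / ((b3 : ℝ) - a3) := one_div_pos.2 (by linarith)
  have hinv : Tendsto (fun ε : ℝ => 1 / ε) (nhdsWithin (0 : ℝ) (Ioi 0)) atTop := by
    simpa using tendsto_inv_nhdsGT_zero (𝕜 := ℝ)
  have hexp : 0 < 6 - 11 * (α - 1) := by linarith
  have hbig : ∀ᶠ ε in nhdsWithin (0 : ℝ) (Ioi 0),
      (2 * (18 * W)) ^ 11 / v ^ 6 < (1 / ε) ^ (6 - 11 * (α - 1)) :=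
    ((tendsto_rpow_atTop hexp).comp hinv).eventually_gt_atTop _
  have hall : ∀ᶠ ε in nhdsWithin (0 : ℝ) (Ioi 0), False := by
    filter_upwards [hbig, eventually_cover (hf j1) hα0 (hα j1),
      eventually_cover (hf j2) hα0 (hα j2), eventually_cover (hf j3) hα0 (hα j3),
      eventually_small (show 0 < ((b1 : ℝ) - a1) / 2 by linarith),
      eventually_small (show 0 < ((b2 : ℝ) - a2) / 2 by linarith),
      eventually_small (show 0 < ((b3 : ℝ) - a3) / 2 by linarith)]
      with ε hbig ⟨F1, hF1, hc1⟩ ⟨F2, hF2, hc2⟩ ⟨F3, hF3, hc3⟩ he1 he2 he3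
    have hε : 0 < ε := he1.1
    have hX : 0 < 1 / ε := by positivity
    have hXα : (1 / ε) ^ α * ε = (1 / ε) ^ (α - 1) := by
      rw [Real.rpow_sub hX, Real.rpow_one]; field_simp
    have hM : ∀ (F : Finset (Fin 2 → ℝ)) (w : ℝ), (F.card : ℝ) ≤ (1 / ε) ^ α → 0 ≤ w → w ≤ W →
        18 * F.card * ε * w ≤ 18 * W * (1 / ε) ^ (α - 1) := by
      intro F w hF hw0 hw
      calc 18 * F.card * ε * w ≤ 18 * (1 / ε) ^ α * ε * W := by gcongr
        _ = 18 * W * ((1 / ε) ^ α * ε) := by ring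
        _ = _ := by rw [hXα]
    have key := scale_bound _ hTsub s ε (18 * W * (1 / ε) ^ (α - 1)) hε ?_ ?_ ?_
    · rw [← hv] at key
      rw [div_lt_iff₀ (by positivity)] at hbig
      have h6 : ((1 / ε) ^ (α - 1)) ^ 11 * (1 / ε) ^ (6 - 11 * (α - 1)) = (1 / ε) ^ 6 := by
        rw [← Real.rpow_natCast ((1 / ε) ^ (α - 1)), ← Real.rpow_mul hX.le, ← Real.rpow_add hX,
          ← Real.rpow_natCast (1 / ε) 6]
        congr 1
        push_cast
        ring
      have hp : 0 < ((1 / ε) ^ (α - 1)) ^ 11 := by positivity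
      have := mul_lt_mul_of_pos_left hbig hp
      have e1 : ((1 / ε) ^ (α - 1)) ^ 11 * ((1 / ε) ^ (6 - 11 * (α - 1)) * v ^ 6)
          = (v * (1 / ε)) ^ 6 := by
        rw [← mul_assoc, h6]; ring
      have e2 : (2 * (18 * W * (1 / ε) ^ (α - 1))) ^ 11
          = ((1 / ε) ^ (α - 1)) ^ 11 * (2 * (18 * W)) ^ 11 := by ring
      rw [e1, ← e2] at this
      linarith
    · intro A hA
      refine (cell_count F1 ε a1 b1 hε hab1 (by linarith [he1.2]) 0 1 A ?_).trans
        (hM F1 _ hc1 hw1.le (by linarith))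
      intro m hm y hy
      obtain ⟨t, ht, rfl⟩ := hA m hm
      exact ⟨![t + s t, y], hF1 _ (ht.2.1.2 y hy), by simp, by simp⟩
    · intro A hA
      refine (cell_count F2 ε a2 b2 hε hab2 (by linarith [he2.2]) 0 1 A ?_).trans
        (hM F2 _ hc2 hw2.le (by linarith))
      intro m hm y hy
      obtain ⟨t, ht, rfl⟩ := hA m hm
      exact ⟨![t - s t, y], hF2 _ (ht.2.2.1.2 y hy), by simp, by simp⟩
    · intro A hA
      refine (cell_count F3 ε a3 b3 hε hab3 (by linarith [he3.2]) 1 0 A ?_).trans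
        (hM F3 _ hc3 hw3.le (by linarith))
      intro m hm y hy
      obtain ⟨t, ht, rfl⟩ := hA m hm
      exact ⟨![y, s t], hF3 _ (ht.2.2.2.2 y hy), by simp, by simp⟩
  exact (hall.exists).choose_spec

end Lower

/-- If `B ⊆ ℝ²` contains the boundary of an axis-parallel square centered at each point of
`[0,1] × {0}`, then `dim_P B ≥ 17/11`; moreover there is a compact such `B` with
`dim_M B ≤ 7/4`. (The plane carries the sup metric, which is bi-Lipschitz equivalent to the
Euclidean one and hence yields the same Minkowski and packing dimensions.) -/
theorem stmt12 :
    (∀ B : Set (Fin 2 → ℝ),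
      (∀ t ∈ Icc (0 : ℝ) 1, ∃ s > (0 : ℝ), squareBdry ![t, 0] s ⊆ B) →
      (17 : ℝ) / 11 ≤ dimP B) ∧
    (∃ B : Set (Fin 2 → ℝ), IsCompact B ∧
      (∀ t ∈ Icc (0 : ℝ) 1, ∃ s > (0 : ℝ), squareBdry ![t, 0] s ⊆ B) ∧
      dimM B ≤ (7 : ℝ) / 4) := by
  constructor
  · intro B hB
    refine le_csInf ?_ ?_
    · refine ⟨_, fun j => Metric.ball 0 (j : ℝ), ?_, fun j => Metric.isBounded_ball, rfl⟩
      rw [Metric.iUnion_ball_nat]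
      exact subset_univ _
    · rintro a ⟨f, hBf, hf, rfl⟩
      have hbdd : BddAbove (range fun j => dimM (f j)) := by
        refine ⟨3, ?_⟩
        rintro _ ⟨j, rfl⟩
        exact dimM_le (bounded_ratio (hf j))
      have hnn : 0 ≤ ⨆ j, dimM (f j) := by
        refine le_trans ?_ (le_ciSup hbdd 0)
        exact le_limsup_of_frequently_le (ratio_nonneg (f 0)).frequently
          (isBoundedUnder_of_eventually_le (bounded_ratio (hf 0)))
      refine le_of_forall_pos_le_add fun η hη => ?_
      exact lower_bound B hB f hBf hf _ (by linarith) fun j =>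
        lt_of_le_of_lt (le_ciSup hbdd j) (by linarith)
  · exact ⟨Bset, Bset_compact, Bset_squares, Bset_dim⟩
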